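/- Let n ≥ 2 and let q be a Schwartz function on ℝⁿ. Then for every fixed η ∈ ℝⁿ ∖ {0} the map r ↦ S_r(q)(η) is smooth on (0,∞). Moreover, for every 0 < δ < 1 there is a constant C (depending on n and δ) such that for all η ∈ ℝⁿ ∖ {0} and all r ∈ (1−δ, 1+δ), |∂_r S_r(q)(η)| ≤ C K_r(q̂, q̂)(η) + C |η| ∑_{i=1}^n K_r( (x_i q)^∧ , q̂ )(η), where (x_i q)(x) := x_i q(x). -/

import Mathlib

open MeasureTheory Filter Set
open scoped ENNReal RealInnerProductSpace

noncomputable section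

abbrev Euc (n : ℕ) := EuclideanSpace ℝ (Fin n)

/-- The Japanese bracket `⟨x⟩ = (1+|x|²)^{1/2}`. -/
def jap {n : ℕ} (x : Euc n) : ℝ := Real.sqrt (1 + ‖x‖ ^ 2)

/-- The Ewald sphere measure `σ_{rη}`: the `(n-1)`-dimensional Hausdorff measure restricted
to `Γ_r(η) = {ξ : |ξ - η/2| = r|η|/2}`. -/
def ewaldM (n : ℕ) (r : ℝ) (η : Euc n) : Measure (Euc n) :=
  (MeasureTheory.Measure.hausdorffMeasure ((n : ℝ) - 1)).restrict
    (Metric.sphere ((2 : ℝ)⁻¹ • η) (r * ‖η‖ / 2))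

/-- The Fourier transform `f̂(ξ) = ∫ e^{-iξ·x} f(x) dx`. -/
def ft {n : ℕ} (f : Euc n → ℂ) (ξ : Euc n) : ℂ :=
  ∫ x : Euc n, Complex.exp (-Complex.I * ((⟪ξ, x⟫ : ℝ) : ℂ)) * f x

/-- `⟨D⟩^β f`: inverse Fourier transform of `⟨ξ⟩^β f̂(ξ)`. -/
def besselD {n : ℕ} (β : ℝ) (f : Euc n → ℂ) (x : Euc n) : ℂ :=
  (((2 * Real.pi) ^ n : ℝ)⁻¹ : ℝ) •
    ∫ ξ : Euc n, Complex.exp (Complex.I * ((⟪ξ, x⟫ : ℝ) : ℂ)) *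
      (((jap ξ ^ β : ℝ) : ℂ) * ft f ξ)

/-- The weighted Sobolev norm `‖f‖_{W^{β,2}_δ} = ‖⟨·⟩^δ ⟨D⟩^β f‖_{L²}`. -/
def wSobNorm {n : ℕ} (β δ : ℝ) (f : Euc n → ℂ) : ℝ≥0∞ :=
  eLpNorm (fun x : Euc n => (jap x ^ δ : ℝ) • besselD β f x) 2 volume

/-- The spherical operator
`S_r(q)(η) = (2/(|η|(1+r))) ∫_{Γ_r(η)} q̂(ξ) q̂(η-ξ) dσ_{rη}(ξ)`. -/
def Sr {n : ℕ} (r : ℝ) (q : Euc n → ℂ) (η : Euc n) : ℂ :=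
  ((2 / (‖η‖ * (1 + r))) : ℝ) • ∫ ξ, ft q ξ * ft q (η - ξ) ∂(ewaldM n r η)

/-- `K_r(g₁,g₂)(η) = (1/|η|) ∫_{Γ_r(η)} |g₁(ξ)||g₂(η-ξ)| dσ_{rη}(ξ)`. -/
def Kr {n : ℕ} (r : ℝ) (g₁ g₂ : Euc n → ℂ) (η : Euc n) : ℝ :=
  ‖η‖⁻¹ * ∫ ξ, ‖g₁ ξ‖ * ‖g₂ (η - ξ)‖ ∂(ewaldM n r η)

/-!
Rescaling the Ewald sphere to the unit sphere turns `∫ f dσ_{rη}` into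
`(r|η|/2)^(n-1) ∫_{|x| = 1} f(η/2 + (r|η|/2) x) dσ(x)`, an integral over a fixed compact set of
finite measure, whose integrand is as smooth in `r` as `f` is. Compactness therefore allows
differentiation under the integral sign, for `f(ξ) = q̂(ξ) q̂(η - ξ)` as often as `q̂` is
continuously differentiable.

The first derivative has two parts. The prefactor `2/(|η|(1+r))` and the Jacobian `r^(n-1)`
contribute `((n-1)/r - 1/(1+r)) S_r(q)(η)`, bounded by a multiple of `K_r(q̂, q̂)(η)`. The
integrand contributes its derivative along the radial velocity `r⁻¹ (ξ - η/2)`, of norm `|η|/2`;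
since `∂ᵢq̂ = -i (xᵢq)^`, it is bounded by the `K_r((xᵢq)^, q̂)(η)` and `K_r(q̂, (xᵢq)^)(η)`, which
agree because the reflection `ξ ↦ η - ξ` preserves the Ewald sphere.

The unit sphere has finite Hausdorff measure because two opposite closed hemispheres cover it, and
stereographic projection parametrizes each of them by a compact set with locally Lipschitz inverse.
-/

open Metric Module
open scoped FourierTransform

section HausdorffSphere

theorem hausdorffMeasure_image_lt_top_of_isCompact {V X : Type*} [NormedAddCommGroup V]
    [NormedSpace ℝ V] [FiniteDimensional ℝ V] [MeasurableSpace V] [BorelSpace V] [MetricSpace X]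
    [MeasurableSpace X] [BorelSpace X] {f : V → X} (hf : LocallyLipschitz f) {K : Set V}
    (hK : IsCompact K) : μH[finrank ℝ V] (f '' K) < ∞ := by
  obtain ⟨C, hC⟩ := hf.locallyLipschitzOn.exists_lipschitzOnWith_of_compact hK
  refine (hC.hausdorffMeasure_image_le (by positivity)).trans_lt (ENNReal.mul_lt_top ?_ ?_)
  · exact ENNReal.rpow_lt_top_of_nonneg (by positivity) ENNReal.coe_ne_top
  · exact hK.measure_lt_top

variable {E : Type*} [NormedAddCommGroup E] [InnerProductSpace ℝ E] [FiniteDimensional ℝ E]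
  [MeasurableSpace E] [BorelSpace E]

theorem hausdorffMeasure_hemisphere_lt_top {v : E} (hv : ‖v‖ = 1) :
    μH[finrank ℝ E - 1] (sphere (0 : E) 1 ∩ {x | ⟪v, x⟫ ≤ 0}) < ∞ := by
  set H := sphere (0 : E) 1 ∩ {x | ⟪v, x⟫ ≤ 0}
  have hdim : (finrank ℝ E - 1 : ℝ) = finrank ℝ (ℝ ∙ v)ᗮ := by
    have hv₀ : v ≠ 0 := by
      rintro rfl
      simp at hv
    rw [← Submodule.finrank_add_finrank_orthogonal (ℝ ∙ v), finrank_span_singleton hv₀]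
    push_cast
    ring
  have hH : IsCompact H :=
    (isCompact_sphere 0 1).inter_right (isClosed_le (by fun_prop) continuous_const)
  have hstereo : ContinuousOn (stereoToFun v) H :=
    continuousOn_stereoToFun.mono fun x hx => ((mem_ofPred.1 hx.2).trans_lt one_pos).ne
  have hinv : LocallyLipschitz fun w : (ℝ ∙ v)ᗮ => stereoInvFunAux v w :=
    (contDiff_stereoInvFunAux.comp (ℝ ∙ v)ᗮ.subtypeL.contDiff (n := 1)).locallyLipschitz
  rw [hdim]
  refine (measure_mono ?_).trans_lt
    (hausdorffMeasure_image_lt_top_of_isCompact hinv (hH.image_of_continuousOn hstereo))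
  intro x hx
  have hxv : x ≠ v := by
    rintro rfl
    have hvv := mem_ofPred.1 hx.2
    rw [real_inner_self_eq_norm_sq, hv] at hvv
    norm_num at hvv
  exact ⟨_, mem_image_of_mem _ hx, congrArg Subtype.val (stereo_left_inv hv (x := ⟨x, hx.1⟩) hxv)⟩

theorem hausdorffMeasure_unitSphere_lt_top :
    μH[finrank ℝ E - 1] (sphere (0 : E) 1) < ∞ := by
  obtain hE | hE := subsingleton_or_nontrivial E
  · simp [sphere_eq_empty_of_subsingleton one_ne_zero]
  obtain ⟨v, hv⟩ := exists_norm_eq E zero_le_one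
  refine (measure_mono fun x hx => ?_).trans_lt (measure_union_lt_top
    (hausdorffMeasure_hemisphere_lt_top hv)
    (hausdorffMeasure_hemisphere_lt_top (v := -v) (by simpa using hv)))
  rcases le_total ⟪v, x⟫ 0 with h | h
  · exact Or.inl ⟨hx, h⟩
  · exact Or.inr ⟨hx, by simpa [inner_neg_left] using h⟩

end HausdorffSphere

section ParametricIntegral

variable {α F : Type*} [MeasurableSpace α] [NormedAddCommGroup F]
  [NormedSpace ℝ F] {μ : Measure α} {K : Set α}

theorem hasDerivAt_setIntegral_of_isCompact [TopologicalSpace α] [T2Space α]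
    [OpensMeasurableSpace α] (hK : IsCompact K) (hμK : μ K ≠ ∞) {f f' : ℝ → α → F}
    (hf : ∀ t, Continuous (f t)) (hf' : Continuous (Function.uncurry f'))
    (hderiv : ∀ t a, HasDerivAt (f · a) (f' t a) t) (t : ℝ) :
    HasDerivAt (fun s => ∫ a in K, f s a ∂μ) (∫ a in K, f' t a ∂μ) t := by
  obtain ⟨C, hC⟩ := ((isCompact_closedBall t 1).prod hK).exists_bound_of_continuousOn
    hf'.continuousOn
  have hmeas {g : α → F} (hg : Continuous g) : AEStronglyMeasurable g (μ.restrict K) :=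
    hg.continuousOn.aestronglyMeasurable_of_isCompact hK hK.measurableSet
  refine (hasDerivAt_integral_of_dominated_loc_of_deriv_le (bound := fun _ => C)
    (closedBall_mem_nhds t one_pos) (.of_forall fun s => hmeas (hf s))
    ((hf t).continuousOn.integrableOn_of_subset_isCompact hK hK.measurableSet subset_rfl hμK)
    (hmeas (by fun_prop)) ?_ (integrableOn_const hμK) (.of_forall fun a s _ => hderiv s a)).2
  filter_upwards [ae_restrict_mem hK.measurableSet] with a ha s hs using hC (s, a) ⟨hs, ha⟩

variable {E : Type*} [NormedAddCommGroup E] [NormedSpace ℝ E] [MeasurableSpace E] [BorelSpace E]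
  {μ : Measure E} {K : Set E}

theorem hasDerivAt_setIntegral_fderiv (hK : IsCompact K) (hμK : μ K ≠ ∞) {G : ℝ × E → F}
    (hG : ContDiff ℝ 1 G) (t : ℝ) :
    HasDerivAt (fun s => ∫ x in K, G (s, x) ∂μ) (∫ x in K, fderiv ℝ G (t, x) (1, 0) ∂μ) t := by
  refine hasDerivAt_setIntegral_of_isCompact hK hμK (fun s => hG.continuous.comp (by fun_prop))
    (f' := fun t x => fderiv ℝ G (t, x) (1, 0))
    ((hG.continuous_fderiv one_ne_zero).clm_apply continuous_const) (fun s x => ?_) t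
  exact ((hG.differentiable one_ne_zero (s, x)).hasFDerivAt).comp_hasDerivAt s
    ((hasDerivAt_id s).prodMk (hasDerivAt_const s x))

theorem contDiff_setIntegral_of_isCompact [SecondCountableTopologyEither E F]
    (hK : IsCompact K) (hμK : μ K ≠ ∞) {G : ℝ × E → F}
    {k : ℕ∞} (hG : ContDiff ℝ k G) : ContDiff ℝ k fun t => ∫ x in K, G (t, x) ∂μ := by
  rw [contDiff_iff_forall_nat_le] at hG ⊢
  intro m hm
  replace hG := hG m hm
  clear hm
  induction m generalizing G with
  | zero =>
    have : IsFiniteMeasure (μ.restrict K) := isFiniteMeasure_restrict.2 hμK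
    have := continuous_parametric_integral_of_continuous (μ := μ.restrict K)
      (f := fun t x => G (t, x)) hG.continuous hK
    rw [Measure.restrict_restrict_of_subset subset_rfl] at this
    exact contDiff_zero.2 this
  | succ m ih =>
    have hG₁ : ContDiff ℝ 1 G := hG.of_le (by norm_cast; omega)
    have hderiv := hasDerivAt_setIntegral_fderiv hK hμK hG₁
    push_cast at hG ⊢
    rw [contDiff_succ_iff_deriv]
    refine ⟨fun t => (hderiv t).differentiableAt, by simp, ?_⟩
    rw [funext fun t => (hderiv t).deriv]
    exact ih ((hG.fderiv_right le_rfl).clm_apply contDiff_const)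

end ParametricIntegral

section SphericalIntegral

theorem preimage_add_smul_sphere {E : Type*} [NormedAddCommGroup E] [NormedSpace ℝ E] (c : E)
    {ρ : ℝ} (hρ : 0 < ρ) :
    (fun x => c + ρ • x) ⁻¹' sphere c ρ = sphere 0 1 := by
  ext x
  simp [mem_sphere_iff_norm, norm_smul, abs_of_pos hρ, hρ.ne']

variable {E F : Type*} [NormedAddCommGroup E] [NormedSpace ℝ E] [MeasurableSpace E] [BorelSpace E]
  [NormedAddCommGroup F] [NormedSpace ℝ F] {d ρ : ℝ}

theorem map_add_smul_hausdorffMeasure (hd : 0 ≤ d) (c : E) (hρ : ρ ≠ 0) :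
    (μH[d] : Measure E).map (fun x => c + ρ • x) = ‖ρ‖₊⁻¹ ^ d • μH[d] := by
  have hcomp : (fun x : E => c + ρ • x) = IsometryEquiv.addLeft c ∘ AffineMap.homothety 0 ρ := by
    ext x
    simp [AffineMap.homothety_apply]
  rw [hcomp, ← Measure.map_map (by fun_prop) (AffineMap.homothety_continuous 0 ρ).measurable,
    map_homothety_hausdorffMeasure hd 0 hρ, Measure.map_smul,
    IsometryEquiv.map_hausdorffMeasure]

theorem hausdorffMeasure_eq_smul_map_add_smul (hd : 0 ≤ d) (c : E) (hρ : ρ ≠ 0) :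
    (μH[d] : Measure E) = ‖ρ‖₊ ^ d • μH[d].map fun x => c + ρ • x := by
  rw [map_add_smul_hausdorffMeasure hd c hρ, smul_smul, ← NNReal.mul_rpow,
    mul_inv_cancel₀ (nnnorm_ne_zero_iff.2 hρ), NNReal.one_rpow, one_smul]

theorem hausdorffMeasure_sphere (hd : 0 ≤ d) (c : E) (hρ : 0 < ρ) :
    μH[d] (sphere c ρ) = ‖ρ‖₊ ^ d • μH[d] (sphere (0 : E) 1) := by
  nth_rw 1 [hausdorffMeasure_eq_smul_map_add_smul hd c hρ.ne']
  rw [Measure.smul_apply, Measure.map_apply (by fun_prop) isClosed_sphere.measurableSet,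
    preimage_add_smul_sphere c hρ]

theorem setIntegral_sphere_hausdorffMeasure (hd : 0 ≤ d) (c : E) (hρ : 0 < ρ) (f : E → F) :
    ∫ x in sphere c ρ, f x ∂μH[d] = ρ ^ d • ∫ x in sphere (0 : E) 1, f (c + ρ • x) ∂μH[d] := by
  have hemb : MeasurableEmbedding fun x => c + ρ • x :=
    ((Homeomorph.smulOfNeZero ρ hρ.ne').trans (Homeomorph.addLeft c)).measurableEmbedding
  nth_rw 1 [hausdorffMeasure_eq_smul_map_add_smul hd c hρ.ne']
  rw [Measure.restrict_smul, integral_smul_nnreal_measure, hemb.setIntegral_map,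
    preimage_add_smul_sphere c hρ, NNReal.smul_def, NNReal.coe_rpow, coe_nnnorm,
    Real.norm_of_nonneg hρ.le]

variable [ProperSpace E] {f : E → F}

theorem contDiffOn_setIntegral_sphere [SecondCountableTopologyEither E F] (hd : 0 ≤ d)
    (hσ : μH[d] (sphere (0 : E) 1) ≠ ∞) (c : E) {k : ℕ∞} (hf : ContDiff ℝ k f) :
    ContDiffOn ℝ k (fun ρ => ∫ x in sphere c ρ, f x ∂μH[d]) (Ioi 0) := by
  have hpow : ContDiffOn ℝ k (fun ρ : ℝ => ρ ^ d) (Ioi 0) :=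
    contDiffOn_id.rpow_const_of_ne fun ρ hρ => (mem_Ioi.1 hρ).ne'
  have hinteg : ContDiff ℝ k fun ρ : ℝ => ∫ x in sphere (0 : E) 1, f (c + ρ • x) ∂μH[d] :=
    contDiff_setIntegral_of_isCompact (G := fun p => f (c + p.1 • p.2)) (isCompact_sphere 0 1) hσ
      (hf.comp (by fun_prop))
  exact (hpow.smul hinteg.contDiffOn).congr fun ρ hρ =>
    setIntegral_sphere_hausdorffMeasure hd c hρ f

theorem hasDerivAt_setIntegral_sphere (hd : 0 ≤ d) (hσ : μH[d] (sphere (0 : E) 1) ≠ ∞)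
    (c : E) (hf : ContDiff ℝ 1 f) (hρ : 0 < ρ) :
    HasDerivAt (fun ρ => ∫ x in sphere c ρ, f x ∂μH[d])
      ((d / ρ) • (∫ x in sphere c ρ, f x ∂μH[d]) +
        ∫ x in sphere c ρ, fderiv ℝ f x (ρ⁻¹ • (x - c)) ∂μH[d]) ρ := by
  have hinteg : HasDerivAt (fun ρ : ℝ => ∫ x in sphere (0 : E) 1, f (c + ρ • x) ∂μH[d])
      (∫ x in sphere (0 : E) 1, fderiv ℝ f (c + ρ • x) x ∂μH[d]) ρ := by
    refine hasDerivAt_setIntegral_of_isCompact (isCompact_sphere 0 1) hσ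
      (f := fun ρ x => f (c + ρ • x)) (f' := fun ρ x => fderiv ℝ f (c + ρ • x) x)
      (fun s => hf.continuous.comp (by fun_prop)) ?_ (fun s x => ?_) ρ
    · exact ((hf.continuous_fderiv one_ne_zero).comp
        (g := fderiv ℝ f) (f := fun p : ℝ × E => c + p.1 • p.2) (by fun_prop)).clm_apply
        continuous_snd
    · have hray : HasDerivAt (fun s : ℝ => c + s • x) x s := by
        simpa using ((hasDerivAt_id s).smul_const x).const_add c
      exact (hf.differentiable one_ne_zero _).hasFDerivAt.comp_hasDerivAt s hray
  have hprod := (Real.hasDerivAt_rpow_const (p := d) (Or.inl hρ.ne')).smul hinteg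
  refine (hprod.congr_of_eventuallyEq ?_).congr_deriv ?_
  · filter_upwards [Ioi_mem_nhds hρ] with s hs using setIntegral_sphere_hausdorffMeasure hd c hs f
  · rw [setIntegral_sphere_hausdorffMeasure hd c hρ, setIntegral_sphere_hausdorffMeasure hd c hρ]
    simp only [add_sub_cancel_left, inv_smul_smul₀ hρ.ne', smul_smul]
    rw [add_comm, Real.rpow_sub_one hρ.ne', div_mul_eq_mul_div, mul_div_assoc]

end SphericalIntegral

section FourierTransform

/-- `f` has finite absolute moments up to order `k`: the hypothesis under which the Fourier
transform of `f` is of class `C^k`. The moments are stated without a norm around `f`, so that the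
case of order `0` contains the measurability of `f`. -/
def HasFiniteMoments {V F : Type*} [NormedAddCommGroup V] [MeasureSpace V] [NormedAddCommGroup F]
    [NormedSpace ℝ F] (k : ℕ∞) (f : V → F) : Prop :=
  ∀ j : ℕ, j ≤ k → Integrable fun x => ‖x‖ ^ j • f x

namespace HasFiniteMoments

variable {V F : Type*} [NormedAddCommGroup V] [MeasureSpace V] [NormedAddCommGroup F]
  [NormedSpace ℝ F] {k : ℕ∞} {f : V → F}

theorem integrable (hf : HasFiniteMoments k f) : Integrable f := by
  simpa using hf 0 zero_le

theorem integrable_norm_pow_mul_norm (hf : HasFiniteMoments k f) (j : ℕ) (hj : j ≤ k) :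
    Integrable fun x => ‖x‖ ^ j * ‖f x‖ := by
  simpa [norm_smul] using (hf j hj).norm

theorem integrable_norm_mul_norm (hf : HasFiniteMoments 1 f) :
    Integrable fun x => ‖x‖ * ‖f x‖ := by
  simpa using hf.integrable_norm_pow_mul_norm 1 le_rfl

end HasFiniteMoments

theorem hasFiniteMoments_schwartzMap {V F : Type*} [NormedAddCommGroup V] [NormedSpace ℝ V]
    [MeasureSpace V] [BorelSpace V] [SecondCountableTopology V]
    [(volume : Measure V).HasTemperateGrowth] [NormedAddCommGroup F] [NormedSpace ℝ F]
    (f : SchwartzMap V F) (k : ℕ∞) : HasFiniteMoments k f := fun j _ =>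
  (f.integrable_pow_mul volume j).mono'
    ((continuous_norm.pow j).smul f.continuous).aestronglyMeasurable
    (.of_forall fun x => by simp [norm_smul])

variable {n : ℕ} {f : Euc n → ℂ}

theorem ft_eq_fourier (f : Euc n → ℂ) (ξ : Euc n) : ft f ξ = 𝓕 f ((2 * Real.pi)⁻¹ • ξ) := by
  rw [ft, Real.fourier_eq']
  congr! 3 with x
  rw [real_inner_smul_right, real_inner_comm]
  push_cast
  field_simp [Real.pi_ne_zero]

theorem continuous_ft (hf : Integrable f) : Continuous (ft f) := by
  rw [funext (ft_eq_fourier f)]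
  exact (VectorFourier.fourierIntegral_continuous Real.continuous_fourierChar
    (by exact continuous_inner) hf).comp (continuous_const_smul _)

theorem contDiff_ft {k : ℕ∞} (hf : HasFiniteMoments k f) : ContDiff ℝ k (ft f) := by
  rw [funext (ft_eq_fourier f)]
  exact (Real.contDiff_fourier hf.integrable_norm_pow_mul_norm).comp (contDiff_const_smul _)

theorem fderiv_ft_apply (hf : HasFiniteMoments 1 f) (ξ v : Euc n) :
    fderiv ℝ (ft f) ξ v = -Complex.I * ft (fun x => (⟪v, x⟫ : ℝ) * f x) ξ := by
  set g := VectorFourier.fourierSMulRight (innerSL ℝ) f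
  have hg : Integrable g := by
    refine (hf.integrable_norm_mul_norm.const_mul (2 * Real.pi * ‖innerSL (E := Euc n) ℝ‖)).mono'
      hf.integrable.1.fourierSMulRight (.of_forall fun x => ?_)
    exact (VectorFourier.norm_fourierSMulRight_le _ _ _).trans_eq (by ring)
  have hderiv : HasFDerivAt (ft f) (𝓕 g ((2 * Real.pi)⁻¹ • ξ) ∘L
      ((2 * Real.pi)⁻¹ • ContinuousLinearMap.id ℝ (Euc n))) ξ := by
    rw [funext (ft_eq_fourier f)]
    exact (Real.hasFDerivAt_fourier hf.integrable hf.integrable_norm_mul_norm _).comp ξ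
      ((2 * Real.pi)⁻¹ • ContinuousLinearMap.id ℝ (Euc n)).hasFDerivAt
  rw [hderiv.fderiv, ft_eq_fourier]
  simp only [ContinuousLinearMap.comp_apply, smul_apply, ContinuousLinearMap.id_apply, map_smul]
  rw [Real.fourier_continuousLinearMap_apply hg, Real.fourier_eq', Real.fourier_eq',
    ← integral_const_mul, ← integral_smul]
  congr 1 with x
  have hinner : innerSL ℝ x v = ⟪v, x⟫ := real_inner_comm v x
  simp only [g, VectorFourier.fourierSMulRight_apply, hinner, Complex.real_smul, smul_eq_mul]
  push_cast
  field_simp [Real.pi_ne_zero]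

theorem norm_fderiv_ft_apply_le (hf : HasFiniteMoments 1 f) (ξ v : Euc n) :
    ‖fderiv ℝ (ft f) ξ v‖ ≤ ‖v‖ * ∑ i, ‖ft (fun x => ((x i : ℝ) : ℂ) * f x) ξ‖ := by
  have hbasis (i : Fin n) : fderiv ℝ (ft f) ξ (EuclideanSpace.single i 1) =
      -Complex.I * ft (fun x => ((x i : ℝ) : ℂ) * f x) ξ := by
    simp [fderiv_ft_apply hf, EuclideanSpace.inner_single_left]
  rw [← (EuclideanSpace.basisFun (Fin n) ℝ).sum_repr v, map_sum, Finset.mul_sum]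
  refine (norm_sum_le _ _).trans (Finset.sum_le_sum fun i _ => ?_)
  rw [EuclideanSpace.basisFun_apply, map_smul, hbasis, norm_smul, norm_mul, norm_neg,
    Complex.norm_I, one_mul, EuclideanSpace.basisFun_repr,
    (EuclideanSpace.basisFun (Fin n) ℝ).sum_repr]
  gcongr
  exact PiLp.norm_apply_le v i

theorem continuous_ft_coord_mul (hf : HasFiniteMoments 1 f) (i : Fin n) :
    Continuous (ft fun x => ((x i : ℝ) : ℂ) * f x) := by
  refine continuous_ft (hf.integrable_norm_mul_norm.mono' ?_ (.of_forall fun x => ?_))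
  · exact (Continuous.aestronglyMeasurable (by fun_prop)).mul hf.integrable.1
  · rw [norm_mul, Complex.norm_real]
    gcongr
    exact PiLp.norm_apply_le x i

end FourierTransform

section EwaldSphere

variable {n : ℕ} {F : Type*} [NormedAddCommGroup F] {η : Euc n} {r : ℝ}

theorem sub_one_nonneg_of_ne_zero (hη : η ≠ 0) : 0 ≤ (n : ℝ) - 1 := by
  have : Nontrivial (Euc n) := ⟨η, 0, hη⟩
  simpa using Nat.one_le_cast (α := ℝ).2 (finrank_pos (R := ℝ) (M := Euc n))

theorem hausdorffMeasure_unitSphere_euclidean_ne_top (n : ℕ) :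
    μH[(n : ℝ) - 1] (sphere (0 : Euc n) 1) ≠ ∞ := by
  simpa using (hausdorffMeasure_unitSphere_lt_top (E := Euc n)).ne

theorem integrable_ewaldM_of_continuous (hη : η ≠ 0) (hr : 0 < r) {f : Euc n → F}
    (hf : Continuous f) : Integrable f (ewaldM n r η) := by
  refine hf.continuousOn.integrableOn_of_subset_isCompact (isCompact_sphere _ _)
    isClosed_sphere.measurableSet subset_rfl ?_
  rw [hausdorffMeasure_sphere (sub_one_nonneg_of_ne_zero hη) _ (by positivity)]
  exact ENNReal.mul_ne_top ENNReal.coe_ne_top (hausdorffMeasure_unitSphere_euclidean_ne_top n)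

theorem preimage_sub_left_sphere_midpoint (η : Euc n) (ρ : ℝ) :
    (η - ·) ⁻¹' sphere ((2 : ℝ)⁻¹ • η) ρ = sphere ((2 : ℝ)⁻¹ • η) ρ := by
  ext ξ
  have hreflect : η - ξ - (2 : ℝ)⁻¹ • η = -(ξ - (2 : ℝ)⁻¹ • η) := by module
  rw [mem_preimage, mem_sphere_iff_norm, mem_sphere_iff_norm, hreflect, norm_neg]

variable [NormedSpace ℝ F]

theorem integral_ewaldM_sub_left (r : ℝ) (η : Euc n) (f : Euc n → F) :
    ∫ ξ, f (η - ξ) ∂ewaldM n r η = ∫ ξ, f ξ ∂ewaldM n r η := by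
  have hmp : MeasurePreserving (η - ·) (μH[(n : ℝ) - 1] : Measure (Euc n)) μH[(n : ℝ) - 1] :=
    (IsometryEquiv.subLeft η).measurePreserving_hausdorffMeasure _
  have hpre := hmp.setIntegral_preimage_emb (Homeomorph.subLeft η).measurableEmbedding f
    (sphere ((2 : ℝ)⁻¹ • η) (r * ‖η‖ / 2))
  rwa [preimage_sub_left_sphere_midpoint] at hpre

theorem Kr_nonneg (r : ℝ) (f g : Euc n → ℂ) (η : Euc n) : 0 ≤ Kr r f g η :=
  mul_nonneg (by positivity) (integral_nonneg fun ξ => by positivity)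

theorem Kr_comm (r : ℝ) (f g : Euc n → ℂ) (η : Euc n) : Kr r f g η = Kr r g f η := by
  rw [Kr, Kr, ← integral_ewaldM_sub_left r η fun ξ => ‖f ξ‖ * ‖g (η - ξ)‖]
  simp only [sub_sub_cancel, mul_comm]

theorem contDiffOn_integral_ewaldM {k : ℕ∞} {f : Euc n → F} (hf : ContDiff ℝ k f) (hη : η ≠ 0) :
    ContDiffOn ℝ k (fun r => ∫ ξ, f ξ ∂ewaldM n r η) (Ioi 0) :=
  (contDiffOn_setIntegral_sphere (sub_one_nonneg_of_ne_zero hη)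
    (hausdorffMeasure_unitSphere_euclidean_ne_top n) _ hf).comp
    (f := fun r => r * ‖η‖ / 2) (by fun_prop) fun r hr => by
      have := mem_Ioi.1 hr
      exact mem_Ioi.2 (by positivity)

theorem hasDerivAt_integral_ewaldM {f : Euc n → F} (hf : ContDiff ℝ 1 f) (hη : η ≠ 0)
    (hr : 0 < r) :
    HasDerivAt (fun r => ∫ ξ, f ξ ∂ewaldM n r η)
      ((((n : ℝ) - 1) / r) • (∫ ξ, f ξ ∂ewaldM n r η) +
        ∫ ξ, fderiv ℝ f ξ (r⁻¹ • (ξ - (2 : ℝ)⁻¹ • η)) ∂ewaldM n r η) r := by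
  have hρ : HasDerivAt (fun r => r * ‖η‖ / 2) (‖η‖ / 2) r := by
    simpa using ((hasDerivAt_id r).mul_const ‖η‖).div_const 2
  have hsphere := hasDerivAt_setIntegral_sphere (sub_one_nonneg_of_ne_zero hη)
    (hausdorffMeasure_unitSphere_euclidean_ne_top n) ((2 : ℝ)⁻¹ • η) hf
    (show 0 < r * ‖η‖ / 2 by positivity)
  refine (hsphere.scomp r hρ).congr_deriv ?_
  have hscale : ‖η‖ / 2 * (r * ‖η‖ / 2)⁻¹ = r⁻¹ := by field_simp
  rw [smul_add, smul_smul, ← integral_smul (‖η‖ / 2), ewaldM]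
  simp only [← ContinuousLinearMap.map_smul, smul_smul, hscale]
  rw [div_eq_mul_inv ((n : ℝ) - 1), mul_left_comm, hscale, ← div_eq_mul_inv]

end EwaldSphere

section SphericalOperator

variable {n : ℕ} {q : Euc n → ℂ} {η : Euc n} {r : ℝ}

theorem contDiff_ft_mul_ft_sub {k : ℕ∞} (hq : HasFiniteMoments k q) (η : Euc n) :
    ContDiff ℝ k fun ξ => ft q ξ * ft q (η - ξ) :=
  (contDiff_ft hq).mul ((contDiff_ft hq).comp (contDiff_const.sub contDiff_id))

theorem contDiffOn_Sr {k : ℕ∞} (hq : HasFiniteMoments k q) (hη : η ≠ 0) :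
    ContDiffOn ℝ k (fun r => Sr r q η) (Ioi 0) := by
  have hprefactor : ContDiffOn ℝ k (fun r : ℝ => 2 / (‖η‖ * (1 + r))) (Ioi 0) := by
    refine contDiffOn_const.div (by fun_prop) fun r hr => ?_
    have := mem_Ioi.1 hr
    positivity
  exact hprefactor.smul (contDiffOn_integral_ewaldM (contDiff_ft_mul_ft_sub hq η) hη)

theorem hasDerivAt_Sr (hq : HasFiniteMoments 1 q) (hη : η ≠ 0) (hr : 0 < r) :
    HasDerivAt (fun r => Sr r q η)
      ((((n : ℝ) - 1) / r - 1 / (1 + r)) • Sr r q η + (2 / (‖η‖ * (1 + r))) •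
        ∫ ξ, fderiv ℝ (fun ξ => ft q ξ * ft q (η - ξ)) ξ (r⁻¹ • (ξ - (2 : ℝ)⁻¹ • η))
          ∂ewaldM n r η) r := by
  have hprefactor : HasDerivAt (fun r => 2 / (‖η‖ * (1 + r)))
      (-(1 / (1 + r)) * (2 / (‖η‖ * (1 + r)))) r := by
    refine ((hasDerivAt_const r (2 : ℝ)).fun_div
      (((hasDerivAt_id' r).const_add 1).const_mul ‖η‖) (by positivity)).congr_deriv ?_
    field_simp
    ring
  refine (hprefactor.smul (hasDerivAt_integral_ewaldM (contDiff_ft_mul_ft_sub hq η) hη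
    hr)).congr_deriv ?_
  rw [Sr]
  module

theorem norm_Sr_le (hr : 0 ≤ 1 + r) (q : Euc n → ℂ) (η : Euc n) :
    ‖Sr r q η‖ ≤ 2 / (1 + r) * Kr r (ft q) (ft q) η := by
  rw [Sr, Kr, norm_smul, Real.norm_of_nonneg (by positivity), ← mul_assoc, ← div_eq_mul_inv,
    div_div, mul_comm ‖η‖]
  gcongr
  simpa only [norm_mul] using norm_integral_le_integral_norm (fun ξ => ft q ξ * ft q (η - ξ))

theorem norm_fderiv_ft_mul_ft_sub_apply_le (hq : HasFiniteMoments 1 q) (η ξ v : Euc n) :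
    ‖fderiv ℝ (fun ξ => ft q ξ * ft q (η - ξ)) ξ v‖ ≤
      ‖v‖ * ∑ i, (‖ft (fun x => ((x i : ℝ) : ℂ) * q x) ξ‖ * ‖ft q (η - ξ)‖ +
        ‖ft q ξ‖ * ‖ft (fun x => ((x i : ℝ) : ℂ) * q x) (η - ξ)‖) := by
  have hdiff := (contDiff_ft hq).differentiable one_ne_zero
  have hreflect : HasFDerivAt (fun ξ => ft q (η - ξ)) _ ξ :=
    (hdiff (η - ξ)).hasFDerivAt.comp ξ ((hasFDerivAt_id ξ).const_sub η)
  rw [fderiv_fun_mul (hdiff ξ) hreflect.differentiableAt, hreflect.fderiv]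
  simp only [add_apply, smul_apply, ContinuousLinearMap.comp_apply, neg_apply,
    ContinuousLinearMap.id_apply, map_neg, smul_eq_mul]
  rw [Finset.sum_add_distrib, ← Finset.sum_mul, ← Finset.mul_sum, mul_add, add_comm]
  refine (norm_add_le _ _).trans (add_le_add ?_ ?_)
  · rw [norm_mul, mul_comm, ← mul_assoc]
    gcongr
    exact norm_fderiv_ft_apply_le hq ξ v
  · rw [norm_mul, norm_neg, mul_left_comm]
    gcongr
    exact norm_fderiv_ft_apply_le hq (η - ξ) v

theorem norm_integral_fderiv_ft_mul_ft_sub_le (hq : HasFiniteMoments 1 q) (hη : η ≠ 0)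
    (hr : 0 < r) :
    ‖∫ ξ, fderiv ℝ (fun ξ => ft q ξ * ft q (η - ξ)) ξ (r⁻¹ • (ξ - (2 : ℝ)⁻¹ • η))
      ∂ewaldM n r η‖ ≤ ‖η‖ ^ 2 * ∑ i, Kr r (ft fun x => ((x i : ℝ) : ℂ) * q x) (ft q) η := by
  set Q : Fin n → Euc n → ℂ := fun i => ft fun x => ((x i : ℝ) : ℂ) * q x
  have hcont : Continuous (ft q) := continuous_ft hq.integrable
  have hQ (i : Fin n) : Continuous (Q i) := continuous_ft_coord_mul hq i
  have hinteg {f g : Euc n → ℂ} (hf : Continuous f) (hg : Continuous g) :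
      Integrable (fun ξ => ‖f ξ‖ * ‖g (η - ξ)‖) (ewaldM n r η) :=
    integrable_ewaldM_of_continuous hη hr (by fun_prop)
  have hint₁ (i : Fin n) := hinteg (hQ i) hcont
  have hint₂ (i : Fin n) := hinteg hcont (hQ i)
  have hKr (f g : Euc n → ℂ) : ∫ ξ, ‖f ξ‖ * ‖g (η - ξ)‖ ∂ewaldM n r η = ‖η‖ * Kr r f g η := by
    rw [Kr, mul_inv_cancel_left₀ (norm_ne_zero_iff.2 hη)]
  have hpointwise : ∀ᵐ ξ ∂ewaldM n r η,
      ‖fderiv ℝ (fun ξ => ft q ξ * ft q (η - ξ)) ξ (r⁻¹ • (ξ - (2 : ℝ)⁻¹ • η))‖ ≤ ‖η‖ / 2 *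
        ∑ i, (‖Q i ξ‖ * ‖ft q (η - ξ)‖ + ‖ft q ξ‖ * ‖Q i (η - ξ)‖) := by
    filter_upwards [ae_restrict_mem isClosed_sphere.measurableSet] with ξ hξ
    have hspeed : ‖r⁻¹ • (ξ - (2 : ℝ)⁻¹ • η)‖ = ‖η‖ / 2 := by
      rw [norm_smul, mem_sphere_iff_norm.1 hξ, Real.norm_of_nonneg (by positivity)]
      field_simp
    exact hspeed ▸ norm_fderiv_ft_mul_ft_sub_apply_le hq η ξ (r⁻¹ • (ξ - (2 : ℝ)⁻¹ • η))
  calc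
    _ ≤ ∫ ξ, ‖η‖ / 2 * ∑ i, (‖Q i ξ‖ * ‖ft q (η - ξ)‖ + ‖ft q ξ‖ * ‖Q i (η - ξ)‖)
          ∂ewaldM n r η :=
      norm_integral_le_of_norm_le
        ((integrable_finsetSum _ fun i _ => (hint₁ i).fun_add (hint₂ i)).const_mul _) hpointwise
    _ = ‖η‖ / 2 * ∑ i, (‖η‖ * Kr r (Q i) (ft q) η + ‖η‖ * Kr r (ft q) (Q i) η) := by
      rw [integral_const_mul, integral_finsetSum _ fun i _ => (hint₁ i).fun_add (hint₂ i)]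
      simp only [integral_add (hint₁ _) (hint₂ _), hKr]
    _ = ‖η‖ ^ 2 * ∑ i, Kr r (Q i) (ft q) η := by
      simp only [Kr_comm r (ft q), ← two_mul, ← Finset.mul_sum]
      ring

theorem norm_deriv_Sr_le (hq : HasFiniteMoments 1 q) (hη : η ≠ 0) (hr : 0 < r) :
    ‖deriv (fun r => Sr r q η) r‖ ≤ 2 / (1 + r) *
      (|((n : ℝ) - 1) / r - 1 / (1 + r)| * Kr r (ft q) (ft q) η +
        ‖η‖ * ∑ i, Kr r (ft fun x => ((x i : ℝ) : ℂ) * q x) (ft q) η) := by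
  rw [(hasDerivAt_Sr hq hη hr).deriv, mul_add (2 / (1 + r)), mul_left_comm (2 / (1 + r))]
  refine (norm_add_le _ _).trans (add_le_add ?_ ?_)
  · rw [norm_smul, Real.norm_eq_abs]
    gcongr
    exact norm_Sr_le (by positivity) q η
  · rw [norm_smul, Real.norm_of_nonneg (by positivity)]
    refine (mul_le_mul_of_nonneg_left (norm_integral_fderiv_ft_mul_ft_sub_le hq hη hr)
      (by positivity)).trans_eq ?_
    field_simp

end SphericalOperator

theorem stmt6_general (n : ℕ) :
    (∀ (k : ℕ∞) (q : Euc n → ℂ), HasFiniteMoments k q → ∀ η : Euc n, η ≠ 0 →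
        ContDiffOn ℝ k (fun r => Sr r q η) (Ioi 0)) ∧
      ∀ r₀ : ℝ, 0 < r₀ → ∃ C : ℝ, 0 < C ∧
        ∀ q : Euc n → ℂ, HasFiniteMoments 1 q → ∀ η : Euc n, η ≠ 0 → ∀ r ≥ r₀,
          ‖deriv (fun s => Sr s q η) r‖ ≤ C * Kr r (ft q) (ft q) η +
            C * ‖η‖ * ∑ i, Kr r (ft fun x => ((x i : ℝ) : ℂ) * q x) (ft q) η := by
  refine ⟨fun k q hq η hη => contDiffOn_Sr hq hη, fun r₀ hr₀ =>
    ⟨2 * (|(n : ℝ) - 1| / r₀ + 1), by positivity, fun q hq η hη r hr => ?_⟩⟩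
  have hr' : 0 < r := hr₀.trans_le hr
  have hK := Kr_nonneg r (ft q) (ft q) η
  have hKsum : 0 ≤ ∑ i, Kr r (ft fun x => ((x i : ℝ) : ℂ) * q x) (ft q) η :=
    Finset.sum_nonneg fun i _ => Kr_nonneg _ _ _ _
  have hinv : 1 / (1 + r) ≤ 1 := div_le_one_of_le₀ (by linarith) (by positivity)
  have hcoeff : |((n : ℝ) - 1) / r - 1 / (1 + r)| ≤ |(n : ℝ) - 1| / r₀ + 1 := by
    refine (abs_sub _ _).trans (add_le_add ?_ ?_)
    · rw [abs_div, abs_of_pos hr']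
      gcongr
    · rwa [abs_of_pos (by positivity)]
  calc
    _ ≤ _ := norm_deriv_Sr_le hq hη hr'
    _ ≤ 2 * ((|(n : ℝ) - 1| / r₀ + 1) * Kr r (ft q) (ft q) η + (|(n : ℝ) - 1| / r₀ + 1) *
          (‖η‖ * ∑ i, Kr r (ft fun x => ((x i : ℝ) : ℂ) * q x) (ft q) η)) := by
      refine mul_le_mul (div_le_self zero_le_two (by linarith)) (add_le_add (by gcongr) ?_)
        (by positivity) zero_le_two
      exact le_mul_of_one_le_left (by positivity) (le_add_of_nonneg_left (by positivity))
    _ = _ := by ring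

/-- for Schwartz `q`, the map `r ↦ S_r(q)(η)` is smooth on `(0,∞)` for every
`η ≠ 0`, and for every `0 < δ < 1` there is a constant `C` (depending on `n` and `δ` only)
such that for `η ≠ 0` and `r ∈ (1-δ, 1+δ)`,
`|∂_r S_r(q)(η)| ≤ C K_r(q̂,q̂)(η) + C |η| ∑ᵢ K_r((xᵢq)^∧, q̂)(η)`. -/
theorem stmt6 (n : ℕ) (hn : 2 ≤ n) :
    (∀ (q : SchwartzMap (Euc n) ℂ) (η : Euc n), η ≠ 0 →
        ContDiffOn ℝ (⊤ : ℕ∞) (fun r : ℝ => Sr r (⇑q) η) (Set.Ioi 0)) ∧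
      ∀ δ : ℝ, 0 < δ → δ < 1 → ∃ C : ℝ, 0 < C ∧
        ∀ (q : SchwartzMap (Euc n) ℂ) (η : Euc n), η ≠ 0 →
          ∀ r ∈ Set.Ioo (1 - δ) (1 + δ),
            ‖deriv (fun s : ℝ => Sr s (⇑q) η) r‖ ≤
              C * Kr r (ft ⇑q) (ft ⇑q) η +
                C * ‖η‖ * ∑ i : Fin n,
                  Kr r (ft fun x : Euc n => ((x i : ℝ) : ℂ) * q x) (ft ⇑q) η := by
  refine ⟨fun q η hη => (stmt6_general n).1 ⊤ q (hasFiniteMoments_schwartzMap q ⊤) η hη,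
    fun δ _ hδ => ?_⟩
  obtain ⟨C, hC, hbound⟩ := (stmt6_general n).2 (1 - δ) (sub_pos.2 hδ)
  exact ⟨C, hC, fun q η hη r hr => hbound q (hasFiniteMoments_schwartzMap q 1) η hη r hr.1.le⟩
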